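/- Let G_{n,d} be the configuration-model random d-regular multigraph on n vertices. Let k = k(d) = ε_d log d where 0 < ε_d ≤ 1 and ε_d → 0 as d → ∞. Then for every ε > 0 there exists d₀ = d₀(ε, (ε_d)) such that for all d ≥ d₀, with high probability as n → ∞ every k-sparse induced subgraph of G_{n,d} has at most (2 + ε) · (log d / d) · n vertices. -/

import Mathlib

/-!
The configuration model; size bound on `k`-sparse induced subgraphs for `k = ε_d log d`.
-/

open scoped Classical

noncomputable section

/-- The set of pairings (perfect matchings of the `n*d` half-edges) in the configuration
model for a `d`-regular multigraph on `n` vertices. -/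
def pairings (n d : ℕ) : Finset ((Fin n × Fin d) ≃ (Fin n × Fin d)) :=
  Finset.univ.filter fun M => (∀ x, M (M x) = x) ∧ ∀ x, M x ≠ x

/-- The probability, under the uniform distribution on pairings of the configuration model,
of the event `P`. -/
def configProb (n d : ℕ) (P : ((Fin n × Fin d) ≃ (Fin n × Fin d)) → Prop) : ℝ :=
  (((pairings n d).filter P).card : ℝ) / ((pairings n d).card : ℝ)

/-- The number of edges (loops and parallel edges counted) of the sub-multigraph induced on
`S` by the configuration-model multigraph of the pairing `M`. -/
def edgesWithin {n d : ℕ} (M : (Fin n × Fin d) ≃ (Fin n × Fin d)) (S : Finset (Fin n)) : ℕ :=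
  (Finset.univ.filter fun h : Fin n × Fin d => h.1 ∈ S ∧ (M h).1 ∈ S).card / 2

/-!
Reveal the partners of the half-edges attached to a vertex set `S` one at a time. By induction over
these steps, the moment generating function of the number of edges inside `S` is, at negative
arguments, at most that of a Poisson variable of mean about `(|S| d)² / (2 n d)`. Hence, once
`|S| d ≥ (2 + ε) n log d`, a Chernoff bound shows that `S` is sparse with probability at most
`d ^ (-(1 + ε / 8) |S|)`.

For the union bound put `a = (2 + ε) log d / d`, so that `1 / d ≤ a / e`. The subsets of size at
least `a n`, weighted by `(a / e) ^ |S|`, have total weight at most `(1 + a) ^ n e ^ (-a n) ≤ 1`,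
which leaves the exponentially small factor `d ^ (-(ε / 8) a n)`.
-/

section Development

open Finset Filter Real
open scoped Nat Topology

theorem card_erase_erase {α : Type*} [DecidableEq α] {T : Finset α} {x y : α} (hx : x ∈ T)
    (hy : y ∈ T.erase x) : #((T.erase x).erase y) = #T - 2 := by
  rw [card_erase_of_mem hy, card_erase_of_mem hx, Nat.sub_sub]

theorem card_inter_erase_erase {α : Type*} [DecidableEq α] {A T : Finset α} {x z : α}
    (hx : x ∈ A ∩ T) (hz : z ∈ T.erase x) :
    #(A ∩ (T.erase x).erase z) = if z ∈ A then #(A ∩ T) - 2 else #(A ∩ T) - 1 := by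
  have hzmem : z ∈ (A ∩ T).erase x ↔ z ∈ A := by grind
  simp only [inter_erase, card_erase_eq_ite (a := z), card_erase_of_mem hx, hzmem, Nat.sub_sub]

theorem sum_erase_ite_mem {α : Type*} [DecidableEq α] {A T : Finset α} {x : α}
    (hx : x ∈ A ∩ T) (u v : ℝ) :
    ∑ z ∈ T.erase x, (if z ∈ A then u else v) =
      ((#(A ∩ T) : ℝ) - 1) * u + ((#T : ℝ) - #(A ∩ T)) * v := by
  have hin : (#{z ∈ T.erase x | z ∈ A} : ℝ) = #(A ∩ T) - 1 := by
    rw [filter_mem_eq_inter, inter_comm, inter_erase, cast_card_erase_of_mem hx]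
  have hout : (#{z ∈ T.erase x | z ∉ A} : ℝ) = #T - #(A ∩ T) := by
    have hsplit : (#{z ∈ T.erase x | z ∈ A} : ℝ) + #{z ∈ T.erase x | z ∉ A} = #(T.erase x) := by
      exact_mod_cast card_filter_add_card_filter_not (· ∈ A)
    rw [hin, cast_card_erase_of_mem (mem_inter.1 hx).2] at hsplit
    linarith
  rw [sum_ite, sum_const, sum_const, nsmul_eq_mul, nsmul_eq_mul, hin, hout]

theorem one_sub_mul_exp_le {y D : ℝ} (hy1 : y ≤ 1) (hD0 : 0 ≤ D) (hD1 : D ≤ 1) :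
    (1 - y) * exp (y * (1 - D)) ≤ 1 - y * D := by
  have hyD : y * D ≤ 1 := mul_le_one₀ hy1 hD0 hD1
  calc (1 - y) * exp (y * (1 - D))
      ≤ (1 - y * D) * (1 - y * (1 - D)) * exp (y * (1 - D)) := by
        gcongr
        nlinarith [mul_nonneg (mul_nonneg (sq_nonneg y) hD0) (sub_nonneg.2 hD1)]
    _ ≤ (1 - y * D) * exp (-(y * (1 - D))) * exp (y * (1 - D)) := by
        gcongr ?_ * _
        exact mul_le_mul_of_nonneg_left (one_sub_le_exp_neg _) (sub_nonneg.2 hyD)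
    _ = 1 - y * D := by rw [mul_assoc, ← exp_add, neg_add_cancel, exp_zero, mul_one]

/-- A lower bound for the expected number of edges inside a set of `a` points in a uniform perfect
matching of `N` points. The exact value is `a.choose 2 / (N - 1)`; the denominator `N + 1` lets the
recursion `exploration_step` hold without exceptional cases for small `N` and for `a` close to
`N`. -/
def internalEdgesRate (a N : ℕ) : ℝ :=
  a.choose 2 / (N + 1)

theorem internalEdgesRate_of_le_one {a : ℕ} (ha : a ≤ 1) (N : ℕ) : internalEdgesRate a N = 0 := by
  rw [internalEdgesRate, Nat.choose_eq_zero_of_lt (by omega), Nat.cast_zero, zero_div]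

theorem internalEdgesRate_add_one (a N : ℕ) :
    internalEdgesRate (a + 1) N = internalEdgesRate a N + a / (N + 1) := by
  simp only [internalEdgesRate, Nat.cast_choose_two]
  push_cast
  ring

theorem internalEdgesRate_add_two_le {a N : ℕ} (haN : a ≤ N) :
    internalEdgesRate (a + 2) (N + 2) ≤
      internalEdgesRate (a + 1) N + (a + 1) / (N + 1) * (1 - a / (N + 1)) := by
  have haN' : (a : ℝ) ≤ N := by exact_mod_cast haN
  have hdiff : internalEdgesRate (a + 1) N + (a + 1) / (N + 1) * (1 - a / (N + 1)) -
      internalEdgesRate (a + 2) (N + 2) =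
        2 * (a + 1) * (N + 1 - a) / ((N + 1) ^ 2 * (N + 3)) := by
    simp only [internalEdgesRate, Nat.cast_choose_two]
    push_cast
    rw [show (N : ℝ) + 2 + 1 = N + 3 by ring]
    field_simp
    ring
  rw [← sub_nonneg, hdiff]
  exact div_nonneg (mul_nonneg (by positivity) (by linarith)) (by positivity)

-- Match one point of a set of `b + 1` points: its partner lies in the set with probability
-- `p = b / (N + 1)`, which costs a factor `1 - y` and two points instead of one.
theorem exploration_step {y : ℝ} (hy0 : 0 ≤ y) (hy1 : y ≤ 1) {b N : ℕ} (hbN : b ≤ N + 1) :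
    b * ((1 - y) * exp (-(y * internalEdgesRate (b - 1) N))) +
        ((N : ℝ) + 1 - b) * exp (-(y * internalEdgesRate b N)) ≤
      (N + 1) * exp (-(y * internalEdgesRate (b + 1) (N + 2))) := by
  obtain - | a := b
  · simp [internalEdgesRate_of_le_one]
  have haN : a ≤ N := Nat.le_of_succ_le_succ hbN
  set p : ℝ := (a + 1) / (N + 1)
  set D : ℝ := 1 - a / (N + 1) with hD
  set r : ℝ := internalEdgesRate (a + 1) N with hr
  have hNp : (N + 1) * p = a + 1 := mul_div_cancel₀ _ (by positivity)
  have hD0 : 0 ≤ D := sub_nonneg.2 <| div_le_one_of_le₀ (by exact_mod_cast haN.step) (by positivity)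
  have hD1 : D ≤ 1 := sub_le_self _ (by positivity)
  have hrate : internalEdgesRate a N = r - (1 - D) := by
    rw [hr, internalEdgesRate_add_one, hD]; ring
  simp only [Nat.add_sub_cancel, hrate]
  push_cast
  rw [← hNp]
  calc (N + 1) * p * ((1 - y) * exp (-(y * (r - (1 - D))))) +
        (N + 1 - (N + 1) * p) * exp (-(y * r))
      = (N + 1) * exp (-(y * r)) * (p * ((1 - y) * exp (y * (1 - D))) + (1 - p)) := by
        rw [show -(y * (r - (1 - D))) = -(y * r) + y * (1 - D) by ring, exp_add]; ring
    _ ≤ (N + 1) * exp (-(y * r)) * (p * (1 - y * D) + (1 - p)) := by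
        gcongr
        exact one_sub_mul_exp_le hy1 hD0 hD1
    _ = (N + 1) * exp (-(y * r)) * (1 - y * p * D) := by ring
    _ ≤ (N + 1) * exp (-(y * r)) * exp (-(y * p * D)) := by
        gcongr
        exact one_sub_le_exp_neg _
    _ = (N + 1) * exp (-(y * (r + p * D))) := by rw [mul_assoc, ← exp_add]; congr 2; ring
    _ ≤ (N + 1) * exp (-(y * internalEdgesRate (a + 2) (N + 2))) := by
        gcongr
        exact internalEdgesRate_add_two_le haN

theorem sum_exploration_step_le {α : Type*} [DecidableEq α] {A T : Finset α} {x : α} {y : ℝ}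
    (hy0 : 0 ≤ y) (hy1 : y ≤ 1) (hx : x ∈ A ∩ T) {b N : ℕ} (hb : #(A ∩ T) = b + 1)
    (hN : #T = N + 2) :
    ∑ z ∈ T.erase x, (if z ∈ A then (1 - y) * exp (-(y * internalEdgesRate (b - 1) N))
        else exp (-(y * internalEdgesRate b N))) ≤
      (N + 1) * exp (-(y * internalEdgesRate #(A ∩ T) #T)) := by
  have hbT : b + 1 ≤ N + 2 := hb ▸ hN ▸ card_le_card inter_subset_right
  rw [sum_erase_ite_mem hx, hb, hN]
  refine le_trans (le_of_eq ?_) (exploration_step hy0 hy1 (Nat.le_of_succ_le_succ hbT))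
  push_cast
  ring

section Matchings

variable {α : Type*} [Fintype α] [DecidableEq α]

/-- The perfect matchings of `T`, encoded as the involutions of `α` with support exactly `T`;
in particular they fix every point outside `T`, so that matchings of different subsets can be
composed. -/
def matchings (T : Finset α) : Finset (Equiv.Perm α) :=
  {M | Function.Involutive M ∧ M.support = T}

/-- The points of `A` that `M` moves to a point of `A`: for a matching `M`, the half-edges matched
inside `A`. -/
def internalHalfEdges (A : Finset α) (M : Equiv.Perm α) : Finset α :=
  {h ∈ M.support | h ∈ A ∧ M h ∈ A}

/-- The number of edges of the matching `M` with both ends in `A`. -/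
def internalEdges (A : Finset α) (M : Equiv.Perm α) : ℕ :=
  #(internalHalfEdges A M) / 2

theorem mem_matchings {T : Finset α} {M : Equiv.Perm α} :
    M ∈ matchings T ↔ Function.Involutive M ∧ M.support = T := by
  simp only [matchings, mem_filter, mem_univ, true_and]

theorem apply_mem_of_mem_matchings {T : Finset α} {M : Equiv.Perm α} {x : α}
    (hM : M ∈ matchings T) (hx : x ∈ T) : M x ∈ T.erase x := by
  obtain ⟨-, rfl⟩ := mem_matchings.1 hM
  exact mem_erase.2 ⟨Equiv.Perm.mem_support.1 hx, Equiv.Perm.apply_mem_support.2 hx⟩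

theorem swap_mul_mem_matchings_erase {T : Finset α} {M : Equiv.Perm α} (hM : M ∈ matchings T)
    (x : α) : Equiv.swap x (M x) * M ∈ matchings ((T.erase x).erase (M x)) := by
  obtain ⟨hinv, rfl⟩ := mem_matchings.1 hM
  have hcomm : M * Equiv.swap x (M x) = Equiv.swap x (M x) * M := by
    rw [Equiv.mul_swap_eq_swap_mul, hinv x, Equiv.swap_comm]
  refine mem_matchings.2 ⟨fun z => ?_, ?_⟩
  · have hswap : M (Equiv.swap x (M x) (M z)) = Equiv.swap x (M x) z := by
      simpa only [Equiv.Perm.mul_apply, hinv z] using DFunLike.congr_fun hcomm (M z)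
    simp only [Equiv.Perm.mul_apply, hswap, Equiv.swap_apply_self]
  · ext z
    simp only [Equiv.Perm.mem_support, mem_erase, Equiv.Perm.mul_apply, ne_eq,
      Equiv.swap_apply_eq_iff]
    rcases eq_or_ne z x with rfl | hzx
    · simp
    rcases eq_or_ne z (M x) with rfl | hzy
    · simp [hinv x]
    · simp [Equiv.swap_apply_of_ne_of_ne hzx hzy, hzx, hzy]

theorem disjoint_swap_of_mem_matchings_erase {T : Finset α} {M : Equiv.Perm α} {x y : α}
    (hM : M ∈ matchings ((T.erase x).erase y)) : (Equiv.swap x y).Disjoint M := by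
  intro z
  rcases eq_or_ne z x with rfl | hzx
  · right; rw [← Equiv.Perm.notMem_support, (mem_matchings.1 hM).2]; simp
  rcases eq_or_ne z y with rfl | hzy
  · right; rw [← Equiv.Perm.notMem_support, (mem_matchings.1 hM).2]; simp
  · exact .inl (Equiv.swap_apply_of_ne_of_ne hzx hzy)

theorem swap_mul_mem_matchings {T : Finset α} {M : Equiv.Perm α} {x y : α}
    (hM : M ∈ matchings ((T.erase x).erase y)) (hx : x ∈ T) (hy : y ∈ T.erase x) :
    Equiv.swap x y * M ∈ matchings T := by
  have hdisj := disjoint_swap_of_mem_matchings_erase hM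
  obtain ⟨hinv, hsupp⟩ := mem_matchings.1 hM
  refine mem_matchings.2 ⟨fun z => ?_, ?_⟩
  · have hcomm := DFunLike.congr_fun hdisj.commute.eq (M z)
    simp only [Equiv.Perm.mul_apply, hinv z] at hcomm
    simp only [Equiv.Perm.mul_apply, ← hcomm, Equiv.swap_apply_self]
  · rw [hdisj.support_mul, Equiv.Perm.support_swap (ne_of_mem_erase hy).symm, hsupp]
    grind

theorem matchings_empty : matchings (∅ : Finset α) = {1} := by
  ext M
  rw [mem_matchings, Equiv.Perm.support_eq_empty_iff, mem_singleton]
  exact ⟨And.right, fun h => ⟨h ▸ fun _ => rfl, h⟩⟩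

theorem sum_matchings_eq_sum_erase {β : Type*} [AddCommMonoid β] {T : Finset α} {x : α}
    (hx : x ∈ T) (f : Equiv.Perm α → β) :
    ∑ M ∈ matchings T, f M =
      ∑ y ∈ T.erase x, ∑ M ∈ matchings ((T.erase x).erase y), f (Equiv.swap x y * M) := by
  rw [← sum_fiberwise_of_maps_to (g := fun M => M x) fun M hM => apply_mem_of_mem_matchings hM hx]
  refine sum_congr rfl fun y hy => ?_
  refine sum_nbij' (Equiv.swap x y * ·) (Equiv.swap x y * ·) ?_ ?_
    (fun M _ => Equiv.swap_mul_involutive x y M) (fun M _ => Equiv.swap_mul_involutive x y M)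
    (fun M _ => by rw [Equiv.swap_mul_self_mul])
  · intro M hM
    obtain ⟨hMT, rfl⟩ := mem_filter.1 hM
    exact swap_mul_mem_matchings_erase hMT x
  · intro M hM
    have hMx : M x = x := by
      rw [← Equiv.Perm.notMem_support, (mem_matchings.1 hM).2]; simp
    exact mem_filter.2 ⟨swap_mul_mem_matchings hM hx hy, by simp [hMx]⟩

theorem card_matchings {T : Finset α} (hT : Even #T) : #(matchings T) = (#T - 1)‼ := by
  induction T using Finset.strongInduction with
  | H T ih =>
    rcases T.eq_empty_or_nonempty with rfl | ⟨x, hx⟩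
    · rw [matchings_empty]; rfl
    obtain ⟨N, hN⟩ : ∃ N, #T = N + 2 := ⟨#T - 2, by have := card_pos.2 ⟨x, hx⟩; grind⟩
    have hrest (y) (hy : y ∈ T.erase x) :
        #(matchings ((T.erase x).erase y)) = (N - 1)‼ := by
      have hcard : #((T.erase x).erase y) = N := by rw [card_erase_erase hx hy, hN]; rfl
      rw [ih _ ((erase_subset _ _).trans_ssubset (erase_ssubset hx)) (by grind), hcard]
    calc #(matchings T) = ∑ y ∈ T.erase x, #(matchings ((T.erase x).erase y)) := by
          simpa only [card_eq_sum_ones] using sum_matchings_eq_sum_erase hx fun _ => 1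
      _ = #(T.erase x) * (N - 1)‼ := sum_const_nat hrest
      _ = (#T - 1)‼ := by
          rw [card_erase_of_mem hx, hN]; exact (Nat.doubleFactorial_add_one N).symm

theorem mem_internalHalfEdges {A : Finset α} {M : Equiv.Perm α} {z : α} :
    z ∈ internalHalfEdges A M ↔ M z ≠ z ∧ z ∈ A ∧ M z ∈ A := by
  rw [internalHalfEdges, mem_filter, Equiv.Perm.mem_support]

theorem internalHalfEdges_mul (A : Finset α) {σ τ : Equiv.Perm α} (h : σ.Disjoint τ) :
    internalHalfEdges A (σ * τ) = internalHalfEdges A σ ∪ internalHalfEdges A τ := by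
  ext z
  rcases h z with hz | hz
  · simp [mem_internalHalfEdges, h.commute.eq, hz]
  · simp [mem_internalHalfEdges, hz]

theorem internalHalfEdges_swap {A : Finset α} {x y : α} (hx : x ∈ A) (hxy : x ≠ y) :
    internalHalfEdges A (Equiv.swap x y) = if y ∈ A then {x, y} else ∅ := by
  rw [internalHalfEdges, Equiv.Perm.support_swap hxy]
  split_ifs with hy <;> ext z <;> grind

theorem internalEdges_swap_mul {A : Finset α} {M : Equiv.Perm α} {x y : α} (hx : x ∈ A)
    (hxy : x ≠ y) (hM : (Equiv.swap x y).Disjoint M) :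
    internalEdges A (Equiv.swap x y * M) = internalEdges A M + if y ∈ A then 1 else 0 := by
  have hdisj : Disjoint (internalHalfEdges A (Equiv.swap x y)) (internalHalfEdges A M) :=
    hM.disjoint_support.mono (filter_subset _ _) (filter_subset _ _)
  rw [internalEdges, internalHalfEdges_mul A hM, card_union_of_disjoint hdisj,
    internalHalfEdges_swap hx hxy]
  split_ifs with hy
  · rw [card_pair hxy, Nat.add_div_left _ two_pos]; rfl
  · rw [card_empty, zero_add]; rfl

theorem sum_matchings_swap_mul_one_sub_pow {A T : Finset α} {y : ℝ} {x z : α} (hx : x ∈ A)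
    (hxz : x ≠ z) :
    ∑ M ∈ matchings ((T.erase x).erase z), (1 - y) ^ internalEdges A (Equiv.swap x z * M) =
      (if z ∈ A then 1 - y else 1) *
        ∑ M ∈ matchings ((T.erase x).erase z), (1 - y) ^ internalEdges A M := by
  rw [mul_sum]
  refine sum_congr rfl fun M hM => ?_
  rw [internalEdges_swap_mul hx hxz (disjoint_swap_of_mem_matchings_erase hM)]
  split_ifs <;> ring

theorem sum_matchings_one_sub_pow_le_card {y : ℝ} (hy0 : 0 ≤ y) (hy1 : y ≤ 1) (A T : Finset α) :
    ∑ M ∈ matchings T, (1 - y) ^ internalEdges A M ≤ #(matchings T) := by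
  rw [cast_card]
  exact sum_le_sum fun M _ => pow_le_one₀ (sub_nonneg.2 hy1) (sub_le_self 1 hy0)

theorem sum_matchings_one_sub_pow_le {y : ℝ} (hy0 : 0 ≤ y) (hy1 : y ≤ 1) (A : Finset α)
    {T : Finset α} (hT : Even #T) :
    ∑ M ∈ matchings T, (1 - y) ^ internalEdges A M ≤
      exp (-(y * internalEdgesRate #(A ∩ T) #T)) * #(matchings T) := by
  induction T using Finset.strongInduction with
  | H T ih =>
    rcases (A ∩ T).eq_empty_or_nonempty with hAT | ⟨x, hx⟩
    · simpa [hAT, internalEdgesRate_of_le_one] using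
        sum_matchings_one_sub_pow_le_card hy0 hy1 A T
    obtain ⟨hxA, hxT⟩ := mem_inter.1 hx
    obtain ⟨b, hb : #(A ∩ T) = b + 1⟩ := Nat.exists_eq_succ_of_ne_zero (card_ne_zero_of_mem hx)
    obtain ⟨N, hN⟩ : ∃ N, #T = N + 2 := ⟨#T - 2, by have := card_pos.2 ⟨x, hxT⟩; grind⟩
    set E : ℕ → ℝ := fun a => exp (-(y * internalEdgesRate a N))
    have hbranch (z : α) (hz : z ∈ T.erase x) :
        ∑ M ∈ matchings ((T.erase x).erase z), (1 - y) ^ internalEdges A (Equiv.swap x z * M) ≤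
          (if z ∈ A then (1 - y) * E (b - 1) else E b) * (N - 1)‼ := by
      have hcard : #((T.erase x).erase z) = N := by rw [card_erase_erase hxT hz, hN]; rfl
      have heven : Even #((T.erase x).erase z) := by grind
      have hrest := ih _ ((erase_subset _ _).trans_ssubset (erase_ssubset hxT)) heven
      rw [card_matchings heven, hcard, card_inter_erase_erase hx hz, hb] at hrest
      rw [sum_matchings_swap_mul_one_sub_pow hxA (ne_of_mem_erase hz).symm]
      split_ifs at hrest ⊢
      · rw [mul_assoc]
        exact mul_le_mul_of_nonneg_left hrest (sub_nonneg.2 hy1)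
      · rwa [one_mul]
    calc ∑ M ∈ matchings T, (1 - y) ^ internalEdges A M
        = ∑ z ∈ T.erase x, ∑ M ∈ matchings ((T.erase x).erase z),
            (1 - y) ^ internalEdges A (Equiv.swap x z * M) := sum_matchings_eq_sum_erase hxT _
      _ ≤ (∑ z ∈ T.erase x, if z ∈ A then (1 - y) * E (b - 1) else E b) * (N - 1)‼ := by
          rw [sum_mul]
          exact sum_le_sum hbranch
      _ ≤ (N + 1) * exp (-(y * internalEdgesRate #(A ∩ T) #T)) * (N - 1)‼ := by
          gcongr
          exact sum_exploration_step_le hy0 hy1 hx hb hN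
      _ = exp (-(y * internalEdgesRate #(A ∩ T) #T)) * #(matchings T) := by
          have hdouble : #(matchings T) = (N + 1) * (N - 1)‼ := by
            rw [card_matchings hT, hN]
            exact Nat.doubleFactorial_add_one N
          rw [hdouble]
          push_cast
          ring

end Matchings

section ConfigurationModel

variable {n d : ℕ}

theorem pairings_eq_matchings_univ : pairings n d = matchings univ := by
  ext M
  simp [pairings, mem_matchings, Function.Involutive, eq_univ_iff_forall]

theorem edgesWithin_eq_internalEdges {M : Equiv.Perm (Fin n × Fin d)} (hM : M ∈ pairings n d)
    (S : Finset (Fin n)) : edgesWithin M S = internalEdges (S ×ˢ univ) M := by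
  have hne : ∀ z, M z ≠ z := (mem_filter.1 hM).2.2
  unfold edgesWithin internalEdges
  congr 2
  ext z
  simp [mem_internalHalfEdges, hne]

theorem card_pairings_pos (hnd : Even (n * d)) : 0 < #(pairings n d) := by
  rw [pairings_eq_matchings_univ, card_matchings (by simpa using hnd)]
  exact Nat.doubleFactorial_pos _

theorem configProb_not (hnd : Even (n * d)) (P : Equiv.Perm (Fin n × Fin d) → Prop) :
    configProb n d (fun M => ¬P M) = 1 - configProb n d P := by
  have hpos : (0 : ℝ) < #(pairings n d) := by exact_mod_cast card_pairings_pos hnd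
  rw [configProb, configProb, eq_sub_iff_add_eq', ← add_div, div_eq_one_iff_eq hpos.ne']
  norm_cast
  convert card_filter_add_card_filter_not (s := pairings n d) P

theorem configProb_le_one (P : Equiv.Perm (Fin n × Fin d) → Prop) : configProb n d P ≤ 1 :=
  div_le_one_of_le₀ (by exact_mod_cast card_filter_le _ _) (Nat.cast_nonneg _)

theorem configProb_mono {P Q : Equiv.Perm (Fin n × Fin d) → Prop} (hPQ : ∀ M, P M → Q M) :
    configProb n d P ≤ configProb n d Q := by
  unfold configProb
  gcongr with M
  exact hPQ M

theorem configProb_exists_le_sum {ι : Type*} (s : Finset ι)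
    (P : ι → Equiv.Perm (Fin n × Fin d) → Prop) :
    configProb n d (fun M => ∃ i ∈ s, P i M) ≤ ∑ i ∈ s, configProb n d (P i) := by
  simp only [configProb]
  rw [← sum_div]
  gcongr
  norm_cast
  refine (card_le_card fun M => ?_).trans card_biUnion_le
  simp only [mem_filter, mem_biUnion]
  tauto

theorem configProb_edgesWithin_le (hnd : Even (n * d)) (S : Finset (Fin n)) {L : ℝ} (hL : 0 ≤ L)
    (K : ℝ) :
    configProb n d (fun M => edgesWithin M S ≤ K) ≤
      exp (L * K - (1 - exp (-L)) * internalEdgesRate (#S * d) (n * d)) := by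
  have hmgf := sum_matchings_one_sub_pow_le (y := 1 - exp (-L)) (by simpa using hL)
    (by linarith [exp_pos (-L)]) (S ×ˢ (univ : Finset (Fin d))) (T := univ)
    (by simpa using hnd)
  rw [← pairings_eq_matchings_univ, inter_univ, card_product, card_univ, card_univ,
    Fintype.card_prod, Fintype.card_fin, Fintype.card_fin, sub_sub_cancel] at hmgf
  have hmarkov : (#{M ∈ pairings n d | (edgesWithin M S : ℝ) ≤ K} : ℝ) ≤
      exp (L * K) * ∑ M ∈ pairings n d, exp (-L) ^ internalEdges (S ×ˢ univ) M := by
    rw [cast_card, sum_filter, mul_sum]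
    refine sum_le_sum fun M hM => ?_
    rw [← edgesWithin_eq_internalEdges hM S, ← exp_nat_mul, ← exp_add]
    split_ifs with hK
    · exact one_le_exp (by linarith [mul_le_mul_of_nonneg_left hK hL])
    · positivity
  rw [configProb]
  refine div_le_of_le_mul₀ (Nat.cast_nonneg _) (exp_pos _).le (hmarkov.trans ?_)
  rw [sub_eq_add_neg, exp_add, mul_assoc]
  gcongr

theorem mul_le_internalEdgesRate {s : ℕ} {β : ℝ} (hsn : s ≤ n)
    (hβ : β * n ≤ s * d) : s * ((β - 2) / 2) ≤ internalEdgesRate (s * d) (n * d) := by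
  obtain rfl | hs := s.eq_zero_or_pos
  · simp [internalEdgesRate_of_le_one]
  have hs1 : (1 : ℝ) ≤ s := by exact_mod_cast hs
  have hsn' : (s : ℝ) ≤ n := by exact_mod_cast hsn
  have hβd : β ≤ d := by
    have hsd : (s : ℝ) * d ≤ n * d := by gcongr
    nlinarith
  have hmain : (β - 2) * (n * d + 1) ≤ d * (s * d - 1) := by
    have hd : (0 : ℝ) ≤ d := d.cast_nonneg
    nlinarith [mul_le_mul_of_nonneg_left hβ hd, mul_le_mul_of_nonneg_left (hs1.trans hsn') hd]
  rw [internalEdgesRate, le_div_iff₀ (by positivity), Nat.cast_choose_two]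
  push_cast
  linarith [mul_le_mul_of_nonneg_left hmain (Nat.cast_nonneg (α := ℝ) s)]

theorem sum_div_exp_one_pow_card_le_one {ι : Type*} [Fintype ι] {a : ℝ} (ha : 0 ≤ a) :
    ∑ S : Finset ι with a * Fintype.card ι ≤ #S, (a / exp 1) ^ #S ≤ 1 := by
  calc ∑ S : Finset ι with a * Fintype.card ι ≤ #S, (a / exp 1) ^ #S
      ≤ ∑ S : Finset ι with a * Fintype.card ι ≤ #S, a ^ #S * exp (-(a * Fintype.card ι)) := by
        refine sum_le_sum fun S hS => ?_
        rw [div_pow, div_eq_mul_inv, ← exp_nat_mul, mul_one, ← exp_neg]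
        have := (mem_filter.1 hS).2
        gcongr
    _ ≤ ∑ S : Finset ι, a ^ #S * exp (-(a * Fintype.card ι)) :=
        sum_le_sum_of_subset_of_nonneg (filter_subset _ _) fun S _ _ => by positivity
    _ = (a + 1) ^ Fintype.card ι * exp (-(a * Fintype.card ι)) := by
        rw [← sum_mul, ← Fintype.sum_pow_mul_eq_add_pow ι a 1]
        simp
    _ ≤ exp a ^ Fintype.card ι * exp (-(a * Fintype.card ι)) := by
        gcongr
        exact add_one_le_exp a
    _ = 1 := by rw [← exp_nat_mul, ← exp_add, mul_comm, add_neg_cancel, exp_zero]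

variable {ε k : ℝ}

theorem configProb_edgesWithin_le_mul_card (hε : 0 < ε) (hnd : Even (n * d)) (hd : 8 ≤ ε * log d)
    (hk : log (4 + 8 / ε) * k ≤ ε / 8 * log d) {S : Finset (Fin n)}
    (hS : (2 + ε) * log d * n ≤ #S * d) :
    configProb n d (fun M => edgesWithin M S ≤ k * #S) ≤ exp (-((1 + ε / 8) * log d * #S)) := by
  -- The Chernoff parameter `L = log (4 + 8 / ε)` solves the equation `hexpL`: of the surplus
  -- `ε / 2` in the exponent, the factor `1 - exp (-L)`, the threshold `k` and the error in the mean
  -- each cost at most `ε / 8`.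
  have hL : 0 ≤ log (4 + 8 / ε) :=
    log_nonneg (by linarith [div_pos (by norm_num : (0 : ℝ) < 8) hε])
  have hexpL : exp (-log (4 + 8 / ε)) * (1 + ε / 2) = ε / 8 := by
    rw [exp_neg, exp_log (by positivity)]
    field_simp
    ring
  refine (configProb_edgesWithin_le hnd S hL _).trans (exp_le_exp.2 ?_)
  have hμ : #S * (((2 + ε) * log d - 2) / 2) ≤ internalEdgesRate (#S * d) (n * d) :=
    mul_le_internalEdgesRate (by simpa using card_le_univ S) hS
  set q := exp (-log (4 + 8 / ε))
  have hq0 : 0 < q := exp_pos _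
  have hq1 : q ≤ 1 := exp_le_one_iff.2 (neg_nonpos.2 hL)
  have hrate : (1 + ε / 8) * log d ≤
      (1 - q) * (((2 + ε) * log d - 2) / 2) - log (4 + 8 / ε) * k := by
    linear_combination hk + hd / 8 + hexpL * log d + hq0
  nlinarith [mul_le_mul_of_nonneg_left hμ (sub_nonneg.2 hq1),
    mul_le_mul_of_nonneg_left hrate (Nat.cast_nonneg (α := ℝ) #S)]

theorem configProb_edgesWithin_le_mul_pow_card (hε : 0 < ε) (hnd : Even (n * d))
    (hd : 8 ≤ ε * log d) (hk : log (4 + 8 / ε) * k ≤ ε / 8 * log d) {S : Finset (Fin n)}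
    (hS : (2 + ε) * (log d / d) * n ≤ #S) :
    configProb n d (fun M => edgesWithin M S ≤ k * #S) ≤
      exp (-(ε / 8 * log d * ((2 + ε) * (log d / d)) * n)) *
        ((2 + ε) * (log d / d) / exp 1) ^ #S := by
  have hlog : 0 < log d := pos_of_mul_pos_right (by linarith) hε.le
  have hdpos : (0 : ℝ) < d := Nat.cast_pos.2 <| Nat.pos_of_ne_zero fun h => by simp [h] at hlog
  set a : ℝ := (2 + ε) * (log d / d) with ha
  have had : a * d = (2 + ε) * log d := by rw [ha]; field_simp
  have hSd : (2 + ε) * log d * n ≤ #S * d := by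
    rw [← had, mul_right_comm]
    gcongr
  have hinv : exp (-log d) ≤ a / exp 1 := by
    rw [exp_neg, exp_log hdpos, inv_eq_one_div, div_le_div_iff₀ hdpos (exp_pos 1), one_mul, had]
    linarith [exp_one_lt_d9]
  calc configProb n d (fun M => edgesWithin M S ≤ k * #S)
      ≤ exp (-((1 + ε / 8) * log d * #S)) := configProb_edgesWithin_le_mul_card hε hnd hd hk hSd
    _ = exp (-(ε / 8 * log d * #S)) * exp (-log d) ^ #S := by
        rw [← exp_nat_mul, ← exp_add]; congr 1; ring
    _ ≤ exp (-(ε / 8 * log d * a * n)) * (a / exp 1) ^ #S := by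
        rw [mul_assoc _ a]
        gcongr

theorem configProb_exists_large_sparse_le (hε : 0 < ε) (hnd : Even (n * d)) (hd : 8 ≤ ε * log d)
    (hk : log (4 + 8 / ε) * k ≤ ε / 8 * log d) :
    configProb n d (fun M => ∃ S : Finset (Fin n),
        edgesWithin M S ≤ k * #S ∧ (2 + ε) * (log d / d) * n < #S) ≤
      exp (-(ε / 8 * log d * ((2 + ε) * (log d / d)) * n)) := by
  set a : ℝ := (2 + ε) * (log d / d)
  have ha0 : 0 ≤ a :=
    mul_nonneg (by linarith) (div_nonneg (log_natCast_nonneg d) (Nat.cast_nonneg d))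
  set large : Finset (Finset (Fin n)) := {S | a * n ≤ #S}
  calc configProb n d (fun M => ∃ S : Finset (Fin n), edgesWithin M S ≤ k * #S ∧ a * n < #S)
      ≤ configProb n d (fun M => ∃ S ∈ large, edgesWithin M S ≤ k * #S) :=
        configProb_mono fun M ⟨S, hsparse, hS⟩ => ⟨S, mem_filter.2 ⟨mem_univ S, hS.le⟩, hsparse⟩
    _ ≤ ∑ S ∈ large, configProb n d (fun M => edgesWithin M S ≤ k * #S) :=
        configProb_exists_le_sum large _
    _ ≤ ∑ S ∈ large, exp (-(ε / 8 * log d * a * n)) * (a / exp 1) ^ #S :=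
        sum_le_sum fun S hS =>
          configProb_edgesWithin_le_mul_pow_card hε hnd hd hk (mem_filter.1 hS).2
    _ ≤ exp (-(ε / 8 * log d * a * n)) := by
        rw [← mul_sum]
        exact mul_le_of_le_one_right (exp_pos _).le
          (by simpa [large] using sum_div_exp_one_pow_card_le_one (ι := Fin n) ha0)

end ConfigurationModel

theorem ksparse_density_bound_random_regular_general {ε : ℝ} (hε : 0 < ε) :
    ∃ δ > 0, ∀ᶠ d : ℕ in atTop, ∀ k ≤ δ * log d,
      Tendsto (fun n : ℕ => configProb n d fun M => ∀ S : Finset (Fin n),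
          edgesWithin M S ≤ k * #S → #S ≤ (2 + ε) * (log d / d) * n)
        (atTop ⊓ 𝓟 {n : ℕ | Even (n * d)}) (𝓝 1) := by
  have hL : 0 < log (4 + 8 / ε) := log_pos (by linarith [div_pos (by norm_num : (0 : ℝ) < 8) hε])
  refine ⟨ε / 8 / log (4 + 8 / ε), by positivity, ?_⟩
  have hlog : Tendsto (fun d : ℕ => ε * log d) atTop atTop :=
    (tendsto_log_atTop.comp tendsto_natCast_atTop_atTop).const_mul_atTop hε
  filter_upwards [hlog.eventually_ge_atTop 8, eventually_gt_atTop 0] with d hd hdpos k hk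
  have hLk : log (4 + 8 / ε) * k ≤ ε / 8 * log d := by
    rwa [div_mul_eq_mul_div, le_div_iff₀' hL] at hk
  have hlogd : 0 < log d := pos_of_mul_pos_right (by linarith) hε.le
  have hrate : 0 < ε / 8 * log d * ((2 + ε) * (log d / d)) := by positivity
  have hlower : Tendsto (fun n : ℕ => 1 - exp (-(ε / 8 * log d * ((2 + ε) * (log d / d)) * n)))
      (atTop ⊓ 𝓟 {n : ℕ | Even (n * d)}) (𝓝 1) := by
    have hexp := tendsto_exp_neg_atTop_nhds_zero.comp
      (tendsto_natCast_atTop_atTop.const_mul_atTop hrate)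
    simpa using (hexp.const_sub 1).mono_left inf_le_left
  refine tendsto_of_tendsto_of_tendsto_of_le_of_le' hlower tendsto_const_nhds ?_
    (.of_forall fun n => configProb_le_one _)
  refine eventually_inf_principal.2 (.of_forall fun n hnd => ?_)
  have hbad := configProb_exists_large_sparse_le hε hnd hd hLk
  have hcompl := configProb_not hnd fun M => ∃ S : Finset (Fin n),
    edgesWithin M S ≤ k * #S ∧ (2 + ε) * (log d / d) * n < #S
  push Not at hcompl
  linarith

end Development

/-- Lemma: let `k = ε_d log d` with `0 < ε_d ≤ 1` and `ε_d → 0`.  For every `ε > 0` there is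
`d₀` such that for all `d ≥ d₀`, with high probability (as `n → ∞` along `n` with `n*d` even)
every `k`-sparse induced subgraph of the configuration-model random `d`-regular multigraph
has at most `(2 + ε) (log d / d) n` vertices. -/
theorem ksparse_density_bound_random_regular
    (εd : ℕ → ℝ) (hpos : ∀ d : ℕ, 0 < εd d) (hle : ∀ d : ℕ, εd d ≤ 1)
    (hlim : Filter.Tendsto εd Filter.atTop (nhds 0))
    (ε : ℝ) (hε : 0 < ε) :
    ∃ d₀ : ℕ, ∀ d : ℕ, d₀ ≤ d →
      Filter.Tendsto
        (fun n : ℕ => configProb n d (fun M =>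
          ∀ S : Finset (Fin n),
            (edgesWithin M S : ℝ) ≤ (εd d * Real.log d) * S.card →
            (S.card : ℝ) ≤ (2 + ε) * (Real.log d / d) * n))
        (Filter.atTop ⊓ Filter.principal {n : ℕ | Even (n * d)}) (nhds 1) := by
  obtain ⟨δ, hδ, hlarge⟩ := ksparse_density_bound_random_regular_general hε
  exact Filter.eventually_atTop.1 <| (hlarge.and (hlim.eventually_le_const hδ)).mono
    fun d ⟨hd, hεd⟩ => hd _ (mul_le_mul_of_nonneg_right hεd (Real.log_natCast_nonneg d))

end
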